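/- arXiv:2012.06101 — 2 statements merged into one kernel-verified Lean document; each statement's English description precedes it below -/
import Mathlib

section
/- Let G be a finite simple graph with at least three vertices that is not isomorphic to the complete graph K_4. If G is connected and sduo-free (has no s-duo), then G is primarily orientable, i.e., G admits a prime orientation. -/
variable {V : Type*}

/-- `M` is a module of the simple graph `G`: every vertex outside `M` is adjacent
to every vertex of `M` or to no vertex of `M`. -/
def GraphModule (G : SimpleGraph V) (M : Set V) : Prop :=
  ∀ v ∉ M, (∀ x ∈ M, G.Adj v x) ∨ (∀ x ∈ M, ¬ G.Adj v x)

/-- `M` is a module of the digraph with arc relation `D`. -/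
def DigraphModule (D : V → V → Prop) (M : Set V) : Prop :=
  ∀ v ∉ M, ∀ x ∈ M, ∀ y ∈ M, (D v x ↔ D v y) ∧ (D x v ↔ D y v)

/-- The digraph `D` is an orientation of the simple graph `G`: there is an arc between
`x` and `y` (in exactly one direction) iff `x` and `y` are adjacent in `G`. -/
def IsOrientation (G : SimpleGraph V) (D : V → V → Prop) : Prop :=
  ∀ x y : V, ((D x y ∨ D y x) ↔ G.Adj x y) ∧ ¬ (D x y ∧ D y x)

/-- A graph is prime if it has at least 3 vertices and all its modules are trivial. -/
def GraphPrime [Fintype V] (G : SimpleGraph V) : Prop :=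
  3 ≤ Fintype.card V ∧
    ∀ M : Set V, GraphModule G M → M.Subsingleton ∨ M = Set.univ

/-- A digraph is prime if it has at least 3 vertices and all its modules are trivial. -/
def DigraphPrime [Fintype V] (D : V → V → Prop) : Prop :=
  3 ≤ Fintype.card V ∧
    ∀ M : Set V, DigraphModule D M → M.Subsingleton ∨ M = Set.univ

/-- A graph is primarily orientable if it admits a prime orientation. -/
def PrimarilyOrientable [Fintype V] (G : SimpleGraph V) : Prop :=
  ∃ D : V → V → Prop, IsOrientation G D ∧ DigraphPrime D

/-- `S` is a stable module (s-module) of `G`: a module of size at least 2 inducing no edges. -/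
def StableModule (G : SimpleGraph V) (S : Set V) : Prop :=
  GraphModule G S ∧ 2 ≤ S.ncard ∧ ∀ x ∈ S, ∀ y ∈ S, ¬ G.Adj x y

/-- The neighbourhood `N_G(M)` of a module `M`: the vertices outside `M` adjacent to
some (equivalently, every) vertex of `M`. -/
def modNbhd (G : SimpleGraph V) (M : Set V) : Set V :=
  {v | v ∉ M ∧ ∃ x ∈ M, G.Adj v x}

/-- `M` is a module of the subgraph of `G` induced on the vertex set `X`. -/
def ModuleOn (G : SimpleGraph V) (X M : Set V) : Prop :=
  M ⊆ X ∧ ∀ v ∈ X \ M, (∀ x ∈ M, G.Adj v x) ∨ (∀ x ∈ M, ¬ G.Adj v x)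

/-- `S` is an s-duo (stable module of size 2) of the subgraph of `G` induced on `X`. -/
def SduoOn (G : SimpleGraph V) (X S : Set V) : Prop :=
  ModuleOn G X S ∧ S.ncard = 2 ∧ ∀ x ∈ S, ∀ y ∈ S, ¬ G.Adj x y

/-- `S` is an s-duo of `G`. -/
def Sduo (G : SimpleGraph V) (S : Set V) : Prop :=
  SduoOn G Set.univ S

/-- `G` has no s-duo. -/
def SduoFree (G : SimpleGraph V) : Prop := ∀ S : Set V, ¬ Sduo G S

/-- `M` is a module of the subdigraph of `D` induced on the vertex set `X`. -/
def DModuleOn (D : V → V → Prop) (X M : Set V) : Prop :=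
  M ⊆ X ∧ ∀ v ∈ X \ M, ∀ x ∈ M, ∀ y ∈ M, (D v x ↔ D v y) ∧ (D x v ↔ D y v)

/-- The subdigraph of `D` induced on `X` is prime. -/
def DPrimeOn (D : V → V → Prop) (X : Set V) : Prop :=
  3 ≤ X.ncard ∧ ∀ M : Set V, DModuleOn D X M → M.Subsingleton ∨ M = X

/-- `Ext_D(X)`: vertices `v ∉ X` such that `D[X ∪ {v}]` is prime. -/
def ExtD (D : V → V → Prop) (X : Set V) : Set V :=
  {v | v ∉ X ∧ DPrimeOn D (X ∪ {v})}

/-- `⟨X⟩_D`: vertices `v ∉ X` such that `X` is a module of `D[X ∪ {v}]`. -/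
def InnD (D : V → V → Prop) (X : Set V) : Set V :=
  {v | v ∉ X ∧ DModuleOn D (X ∪ {v}) X}

/-- `X_D(u)`: vertices `v ∉ X` such that `{u, v}` is a module of `D[X ∪ {v}]`. -/
def AttD (D : V → V → Prop) (X : Set V) (u : V) : Set V :=
  {v | v ∉ X ∧ DModuleOn D (X ∪ {v}) ({u, v} : Set V)}

/-!
Grow a set `X` of vertices such that `G[X]` has a prime orientation `D`, starting from a directed
path or a directed triangle. For a vertex `v ∉ X` with `d ≥ 1` neighbours in `X` there are `2 ^ d`
ways to orient the edges between `v` and `X`. By the Ehrenfeucht–Rozenberg trichotomy, such an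
orientation fails to be prime only if `X` is a module, which excludes two choices and only occurs
when `v` sees all of `X`, or if `{u, v}` is a module for some `u ∈ X`, which excludes two choices
for every `u` adjacent to `v` and one for every other `u`. Counting leaves a good choice, unless
`X ∪ {v}` is a `4`-clique or `v` has two non-adjacent twins in `X`.

If `G[X]` has no s-duo, the second exception does not arise. If it has an s-duo `{a, b}`, pick
instead a vertex separating `a` from `b`: it lies outside `X` and has no non-adjacent twin in `X`.
As for a `4`-clique `K ≠ V(G)`, a vertex outside `K` with a neighbour in `K` yields either a
`5`-clique, which has a prime orientation, or a triangle of `K` that can be extended.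
-/

section Digraph

variable {D D' : V → V → Prop} {X Y M : Set V} {v : V}

theorem DModuleOn.inter (hM : DModuleOn D Y M) (hXY : X ⊆ Y) : DModuleOn D X (M ∩ X) :=
  ⟨Set.inter_subset_right, fun w hw x hx y hy ↦
    hM.2 w ⟨hXY hw.1, fun hwM ↦ hw.2 ⟨hwM, hw.1⟩⟩ x hx.1 y hy.1⟩

theorem DPrimeOn.finite (hX : DPrimeOn D X) : X.Finite :=
  Set.finite_of_ncard_ne_zero (by have := hX.1; lia)

theorem DPrimeOn.congr (hX : DPrimeOn D X) (h : ∀ x ∈ X, ∀ y ∈ X, D x y ↔ D' x y) :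
    DPrimeOn D' X := by
  refine ⟨hX.1, fun M hM ↦ hX.2 M ⟨hM.1, fun w hw x hx y hy ↦ ?_⟩⟩
  rw [h w hw.1 x (hM.1 hx), h w hw.1 y (hM.1 hy), h x (hM.1 hx) w hw.1, h y (hM.1 hy) w hw.1]
  exact hM.2 w hw x hx y hy

theorem dPrimeOn_univ_iff [Fintype V] : DPrimeOn D Set.univ ↔ DigraphPrime D := by
  simp [DPrimeOn, DigraphPrime, DModuleOn, DigraphModule, Set.ncard_univ]

theorem dPrimeOn_range {W : Type*} [Fintype W] (f : W ↪ V)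
    (h : DigraphPrime fun i j ↦ D (f i) (f j)) : DPrimeOn D (Set.range f) := by
  refine ⟨by simpa [← Set.image_univ, Set.ncard_image_of_injective _ f.injective,
    Set.ncard_univ] using h.1, fun M hM ↦ ?_⟩
  have hM_eq : f '' (f ⁻¹' M) = M := Set.image_preimage_eq_of_subset hM.1
  rcases h.2 (f ⁻¹' M) (fun v hv x hx y hy ↦ hM.2 (f v) ⟨⟨v, rfl⟩, hv⟩ _ hx _ hy) with h | h
  · exact .inl (hM_eq ▸ h.image f)
  · exact .inr (by rw [← hM_eq, h, Set.image_univ])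

theorem DPrimeOn.mem_extD_or_mem_innD_or_mem_attD (hX : DPrimeOn D X) (hv : v ∉ X) :
    v ∈ ExtD D X ∨ v ∈ InnD D X ∨ ∃ u ∈ X, v ∈ AttD D X u := by
  by_contra! ⟨hext, hinn, hatt⟩
  have hcard : 3 ≤ (X ∪ {v}).ncard :=
    hX.1.trans (Set.ncard_le_ncard Set.subset_union_left (hX.finite.union (Set.finite_singleton v)))
  refine hext ⟨hv, hcard, fun M hM ↦ ?_⟩
  have mem_X {x : V} (hx : x ∈ M) (hxv : x ≠ v) : x ∈ X := (hM.1 hx).resolve_right hxv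
  rcases hX.2 _ (hM.inter Set.subset_union_left) with hsub | hfull
  · refine .inl fun x hx y hy ↦ ?_
    have not_mem_v {u : V} (hu : u ∈ M) (huv : u ≠ v) : v ∉ M := by
      intro hvM
      have hM_eq : M = {u, v} := by
        refine subset_antisymm (fun x hx ↦ ?_) (Set.pair_subset hu hvM)
        by_cases hxv : x = v
        · exact .inr hxv
        · exact .inl (hsub ⟨hx, mem_X hx hxv⟩ ⟨hu, mem_X hu huv⟩)
      exact hatt u (mem_X hu huv) ⟨hv, hM_eq ▸ hM⟩
    by_cases hxv : x = v <;> by_cases hyv : y = v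
    · rw [hxv, hyv]
    · exact absurd (hxv ▸ hx) (not_mem_v hy hyv)
    · exact absurd (hyv ▸ hy) (not_mem_v hx hxv)
    · exact hsub ⟨hx, mem_X hx hxv⟩ ⟨hy, mem_X hy hyv⟩
  · have hXM : X ⊆ M := Set.inter_eq_right.1 hfull
    by_cases hvM : v ∈ M
    · exact .inr (hM.1.antisymm (Set.union_subset hXM (Set.singleton_subset_iff.2 hvM)))
    · have hM_eq : M = X :=
        subset_antisymm (fun x hx ↦ mem_X hx fun h ↦ hvM (h ▸ hx)) hXM
      exact absurd ⟨hv, hM_eq ▸ hM⟩ hinn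

/-- The out-neighbourhood of `v` in `X`. -/
def outOn (D : V → V → Prop) (X : Set V) (v : V) : Set V :=
  {x ∈ X | D v x}

theorem outOn_congr {u : V} (hu : u ∈ X) (h : ∀ x ∈ X, ∀ y ∈ X, D x y ↔ D' x y) :
    outOn D X u = outOn D' X u :=
  Set.ext fun x ↦ and_congr_right fun hx ↦ h u hu x hx

end Digraph

section Orientation

variable {G : SimpleGraph V} {D : V → V → Prop} {X Y : Set V} {u v : V}

theorem IsOrientation.adj_iff (hD : IsOrientation G D) : G.Adj u v ↔ D u v ∨ D v u :=
  (hD u v).1.symm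

theorem IsOrientation.adj (hD : IsOrientation G D) (h : D u v) : G.Adj u v :=
  hD.adj_iff.2 (.inl h)

theorem IsOrientation.not_symm (hD : IsOrientation G D) (h : D u v) : ¬ D v u :=
  fun h' ↦ (hD u v).2 ⟨h, h'⟩

theorem exists_isOrientation_extending (G : SimpleGraph V) {E : V → V → Prop}
    (hE : ∀ x y, E x y → ¬ E y x) :
    ∃ D, IsOrientation G D ∧ ∀ x y, G.Adj x y → E x y → D x y := by
  refine ⟨fun x y ↦ G.Adj x y ∧ (E x y ∨ ¬ E y x ∧ WellOrderingRel x y), fun x y ↦ ⟨?_, ?_⟩,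
    fun x y hxy hExy ↦ ⟨hxy, .inl hExy⟩⟩
  · refine ⟨fun h ↦ h.elim And.left fun h ↦ h.1.symm, fun hxy ↦ ?_⟩
    have := trichotomous_of WellOrderingRel x y
    have := hxy.ne
    have := hxy.symm
    tauto
  · have := hE x y
    have := asymm_of WellOrderingRel (a := x) (b := y)
    tauto

theorem IsOrientation.exists_reorientation (hD : IsOrientation G D) {A : Set V}
    (hA : A ⊆ G.neighborSet v) :
    ∃ D', IsOrientation G D' ∧ (∀ y, D' v y ↔ y ∈ A) ∧
      ∀ x y, x ≠ v → y ≠ v → (D x y ↔ D' x y) := by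
  classical
  refine ⟨fun x y ↦ if x = v then y ∈ A else if y = v then G.Adj v x ∧ x ∉ A else D x y,
    fun x y ↦ ?_, by simp, fun x y hx hy ↦ by simp [hx, hy]⟩
  by_cases hx : x = v <;> by_cases hy : y = v
  · subst hx hy
    have : y ∉ A := fun h ↦ (hA h).ne rfl
    simp [this]
  · subst hx
    have : y ∈ A → G.Adj x y := fun h ↦ hA h
    simp only [if_true, hy, if_false]
    tauto
  · subst hy
    have : x ∈ A → G.Adj y x := fun h ↦ hA h
    simp only [if_true, hx, if_false, G.adj_comm x y]
    tauto
  · simpa [hx, hy] using hD x y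

theorem IsOrientation.exists_adj_of_dPrimeOn (hD : IsOrientation G D) (hX : DPrimeOn D X)
    (hYX : Y ⊂ X) (hY : Y.Nonempty) : ∃ x ∈ Y, ∃ y ∈ X \ Y, G.Adj x y := by
  by_contra! hno
  have hnoD {x y : V} (hx : x ∈ Y) (hy : y ∈ X \ Y) : ¬ D x y ∧ ¬ D y x := by
    simpa [hD.adj_iff] using hno x hx y hy
  have hY₁ : Y.Subsingleton := (hX.2 Y ⟨hYX.1, fun w hw x hx y hy ↦ by
    simp [hnoD hx hw, hnoD hy hw]⟩).resolve_right hYX.ne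
  have hY₂ : (X \ Y).Subsingleton := by
    refine (hX.2 (X \ Y) ⟨Set.sdiff_subset, fun w hw x hx y hy ↦ ?_⟩).resolve_right fun h ↦ ?_
    · have hwY : w ∈ Y := by_contra fun h ↦ hw.2 ⟨hw.1, h⟩
      simp [hnoD hwY hx, hnoD hwY hy]
    · obtain ⟨y, hy⟩ := hY
      exact (h.ge (hYX.1 hy)).2 hy
  have := hX.1
  have := Set.ncard_sdiff_add_ncard_of_subset hYX.1 hX.finite
  have : Y.ncard ≤ 1 := (Set.ncard_le_one hY₁.finite).2 hY₁
  have : (X \ Y).ncard ≤ 1 := (Set.ncard_le_one hY₂.finite).2 hY₂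
  lia

end Orientation

section Obstruction

variable {G : SimpleGraph V} {D D' : V → V → Prop} {X : Set V} {u v : V}

/-- For `v ∉ X`, the vertices `u` of `X` such that `{u, v}` is a module of `G[X ∪ {v}]`. -/
def twinsOn (G : SimpleGraph V) (X : Set V) (v : V) : Set V :=
  {u ∈ X | ∀ x ∈ X, x ≠ u → (G.Adj u x ↔ G.Adj v x)}

/-- The out-neighbourhoods of `v` in `X` for which an orientation of `G[X ∪ {v}]` that extends the
prime orientation `D` of `G[X]` can fail to be prime: the first set accounts for the module `X`,
the other two for the modules `{u, v}` with `u ∈ X`. -/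
def obstructions (G : SimpleGraph V) (D : V → V → Prop) (X : Set V) (v : V) : Set (Set V) :=
  {A | X ⊆ G.neighborSet v ∧ (A = ∅ ∨ A = X)} ∪
    (outOn D X '' twinsOn G X v ∪
      (fun u ↦ insert u (outOn D X u)) '' (twinsOn G X v ∩ G.neighborSet v))

theorem obstructions_congr (h : ∀ x ∈ X, ∀ y ∈ X, D x y ↔ D' x y) :
    obstructions G D X v = obstructions G D' X v := by
  have hout : ∀ u ∈ twinsOn G X v, outOn D X u = outOn D' X u := fun u hu ↦ outOn_congr hu.1 h
  rw [obstructions, obstructions, Set.image_congr hout,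
    Set.image_congr fun u hu ↦ congrArg (insert u) (hout u hu.1)]

theorem outOn_mem_obstructions_of_mem_innD (hD : IsOrientation G D) (hv : v ∈ InnD D X)
    (hne : (X ∩ G.neighborSet v).Nonempty) : outOn D X v ∈ obstructions G D X v := by
  obtain ⟨y, hyX, hvy⟩ := hne
  have hmod (x : V) (hx : x ∈ X) : (D v x ↔ D v y) ∧ (D x v ↔ D y v) :=
    hv.2.2 v ⟨.inr rfl, hv.1⟩ x hx y hyX
  refine .inl ⟨fun x hx ↦ ?_, ?_⟩
  · rw [SimpleGraph.mem_neighborSet, hD.adj_iff, (hmod x hx).1, (hmod x hx).2, ← hD.adj_iff]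
    exact hvy
  · by_cases h : D v y
    · exact .inr (Set.sep_eq_self_iff_mem_true.2 fun x hx ↦ (hmod x hx).1.2 h)
    · exact .inl (Set.sep_eq_empty_iff_mem_false.2 fun x hx ↦ (hmod x hx).1.not.2 h)

theorem outOn_mem_obstructions_of_mem_attD (hD : IsOrientation G D) (hu : u ∈ X)
    (hv : v ∈ AttD D X u) : outOn D X v ∈ obstructions G D X v := by
  have hmod (x : V) (hx : x ∈ X) (hxu : x ≠ u) : (D x u ↔ D x v) ∧ (D u x ↔ D v x) := by
    have hxv : x ≠ v := fun h ↦ hv.1 (h ▸ hx)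
    exact hv.2.2 x ⟨.inl hx, by simp [hxu, hxv]⟩ u (by simp) v (by simp)
  have htwin : u ∈ twinsOn G X v := ⟨hu, fun x hx hxu ↦ by
    rw [hD.adj_iff, hD.adj_iff, (hmod x hx hxu).1, (hmod x hx hxu).2]⟩
  have huu : ¬ D u u := fun h ↦ hD.not_symm h h
  by_cases hvu : D v u
  · refine .inr (.inr ⟨u, ⟨htwin, hD.adj hvu⟩, Set.ext fun x ↦ ?_⟩)
    by_cases hxu : x = u
    · simp [outOn, hxu, hu, hvu]
    · simpa [outOn, hxu] using fun hx ↦ (hmod x hx hxu).2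
  · refine .inr (.inl ⟨u, htwin, Set.ext fun x ↦ and_congr_right fun hx ↦ ?_⟩)
    by_cases hxu : x = u
    · simp [hxu, huu, hvu]
    · exact (hmod x hx hxu).2

/-- The subgraph `G[X]` is primarily orientable. The prime orientation is taken on all of `G`,
since the arcs that leave `X` are immaterial. -/
def PrimarilyOrientableOn (G : SimpleGraph V) (X : Set V) : Prop :=
  ∃ D, IsOrientation G D ∧ DPrimeOn D X

theorem primarilyOrientableOn_insert_of_notMem_obstructions (hD : IsOrientation G D)
    (hX : DPrimeOn D X) (hv : v ∉ X) (hne : (X ∩ G.neighborSet v).Nonempty) {A : Set V}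
    (hA : A ⊆ X ∩ G.neighborSet v) (hobs : A ∉ obstructions G D X v) :
    PrimarilyOrientableOn G (insert v X) := by
  obtain ⟨D', hD', hout, hagree⟩ := hD.exists_reorientation (hA.trans Set.inter_subset_right)
  have hDD' : ∀ x ∈ X, ∀ y ∈ X, D x y ↔ D' x y := fun x hx y hy ↦
    hagree x y (ne_of_mem_of_not_mem hx hv) (ne_of_mem_of_not_mem hy hv)
  have houtOn : outOn D' X v = A := by
    simpa [outOn, hout, Set.sep_mem_eq] using hA.trans Set.inter_subset_left
  rw [obstructions_congr hDD', ← houtOn] at hobs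
  rcases (hX.congr hDD').mem_extD_or_mem_innD_or_mem_attD hv with hext | hinn | ⟨u, hu, hatt⟩
  · exact ⟨D', hD', Set.union_singleton ▸ hext.2⟩
  · exact absurd (outOn_mem_obstructions_of_mem_innD hD' hinn hne) hobs
  · exact absurd (outOn_mem_obstructions_of_mem_attD hD' hu hatt) hobs

end Obstruction

section Counting

variable {G : SimpleGraph V} {D : V → V → Prop} {X : Set V} {u v : V}

theorem twinsOn_subset : twinsOn G X v ⊆ X :=
  Set.sep_subset _ _

theorem disjoint_twinsOn_neighborSet (hu : u ∈ twinsOn G X v) (hvu : ¬ G.Adj v u) :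
    Disjoint (twinsOn G X v) (G.neighborSet v) := by
  refine Set.disjoint_left.2 fun w hw (hvw : G.Adj v w) ↦ hvu ?_
  have hwu : w ≠ u := by
    rintro rfl
    exact hvu hvw
  exact (hw.2 u hu.1 hwu.symm).1 ((hu.2 w hw.1 hwu).2 hvw).symm

theorem isClique_insert_of_subset_twinsOn (hadj : X ⊆ G.neighborSet v)
    (htwins : X ⊆ twinsOn G X v) : G.IsClique (insert v X) := by
  refine SimpleGraph.IsClique.insert (fun x hx y hy hxy ↦ ?_) fun x hx _ ↦ hadj hx
  exact ((htwins hx).2 y hy hxy.symm).2 (hadj hy)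

theorem ncard_obstructions_le_one (hu : u ∈ twinsOn G X v) (hvu : ¬ G.Adj v u)
    (huniq : (twinsOn G X v \ G.neighborSet v).Subsingleton) :
    (obstructions G D X v).ncard ≤ 1 := by
  have hdisj := disjoint_twinsOn_neighborSet hu hvu
  have htwins : twinsOn G X v ⊆ {u} := fun w hw ↦
    huniq ⟨hw, Set.disjoint_left.1 hdisj hw⟩ ⟨hu, hvu⟩
  have hsub : obstructions G D X v ⊆ {outOn D X u} := by
    rintro A (⟨hfull, -⟩ | ⟨w, hw, rfl⟩ | ⟨w, hw, -⟩)
    · exact absurd (hfull hu.1) hvu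
    · rw [htwins hw, Set.mem_singleton_iff]
    · exact absurd hw.2 (Set.disjoint_left.1 hdisj hw.1)
  simpa using Set.ncard_le_ncard hsub

theorem ncard_twin_obstructions_le (hX : X.Finite) :
    (outOn D X '' twinsOn G X v ∪
      (fun u ↦ insert u (outOn D X u)) '' (twinsOn G X v ∩ G.neighborSet v)).ncard ≤
      2 * (twinsOn G X v).ncard := by
  have hT : (twinsOn G X v).Finite := hX.subset twinsOn_subset
  calc _ ≤ _ := Set.ncard_union_le _ _
    _ ≤ (twinsOn G X v).ncard + (twinsOn G X v).ncard :=
      add_le_add (Set.ncard_image_le hT) ((Set.ncard_image_le (hT.inter_of_left _)).trans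
        (Set.ncard_le_ncard Set.inter_subset_left hT))
    _ = _ := (two_mul _).symm

theorem ncard_obstructions_le (hX : X.Finite) :
    (obstructions G D X v).ncard ≤ 2 * (twinsOn G X v).ncard + 2 := by
  have hpair : {A | X ⊆ G.neighborSet v ∧ (A = ∅ ∨ A = X)}.ncard ≤ 2 :=
    (Set.ncard_le_ncard (fun A hA ↦ hA.2 : _ ⊆ ({∅, X} : Set (Set V)))).trans
      (Set.ncard_insert_le _ _ |>.trans (by simp))
  have := Set.ncard_union_le {A | X ⊆ G.neighborSet v ∧ (A = ∅ ∨ A = X)} _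
    |>.trans (add_le_add hpair (ncard_twin_obstructions_le (G := G) (D := D) (v := v) hX))
  rw [obstructions]
  lia

theorem ncard_obstructions_le_of_not_subset (hX : X.Finite) (hadj : ¬ X ⊆ G.neighborSet v) :
    (obstructions G D X v).ncard ≤ 2 * (twinsOn G X v).ncard := by
  simpa [obstructions, hadj] using ncard_twin_obstructions_le (G := G) (D := D) (v := v) hX

theorem two_mul_add_two_lt_two_pow {n : ℕ} (hn : 4 ≤ n) : 2 * n + 2 < 2 ^ n := by
  induction n, hn using Nat.le_induction with
  | base => norm_num
  | succ n _ ih => rw [pow_succ]; lia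

theorem ncard_obstructions_lt_of_subset (hX : 3 ≤ X.ncard) (hadj : X ⊆ G.neighborSet v)
    (hK4 : X.ncard = 3 → ¬ G.IsClique (insert v X)) :
    (obstructions G D X v).ncard < 2 ^ X.ncard := by
  have hfin : X.Finite := Set.finite_of_ncard_ne_zero (by lia)
  refine (ncard_obstructions_le hfin).trans_lt ?_
  rcases hX.lt_or_eq with h4 | h3
  · have := Set.ncard_le_ncard (twinsOn_subset (G := G) (v := v)) hfin
    have := two_mul_add_two_lt_two_pow h4
    lia
  · have hne : twinsOn G X v ≠ X := fun h ↦
      hK4 h3.symm (isClique_insert_of_subset_twinsOn hadj h.ge)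
    have := Set.ncard_lt_ncard (twinsOn_subset.ssubset_of_ne hne) hfin
    rw [← h3] at this ⊢
    lia

theorem ncard_obstructions_lt_of_not_subset (hD : IsOrientation G D) (hX : DPrimeOn D X)
    (hadj : ¬ X ⊆ G.neighborSet v) (hne : (X ∩ G.neighborSet v).Nonempty)
    (htwins : twinsOn G X v ⊆ G.neighborSet v) :
    (obstructions G D X v).ncard < 2 ^ (X ∩ G.neighborSet v).ncard := by
  have hssub : twinsOn G X v ⊂ X ∩ G.neighborSet v := by
    refine ⟨Set.subset_inter twinsOn_subset htwins, fun hall ↦ ?_⟩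
    obtain ⟨x, hx, y, ⟨hyX, hyN⟩, hxy⟩ := hD.exists_adj_of_dPrimeOn hX
      ⟨Set.inter_subset_left, fun h ↦ hadj (h.trans Set.inter_subset_right)⟩ hne
    exact hyN ⟨hyX, ((hall hx).2 y hyX hxy.ne').1 hxy⟩
  have hle := ncard_obstructions_le_of_not_subset (D := D) hX.finite hadj
  have hlt := Set.ncard_lt_ncard hssub (hX.finite.inter_of_left _)
  obtain ⟨d, hd⟩ := Nat.exists_eq_add_of_lt hlt
  have := Nat.lt_two_pow_self (n := (twinsOn G X v).ncard + d)
  rw [hd, pow_succ]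
  lia

theorem ncard_obstructions_lt (hD : IsOrientation G D) (hX : DPrimeOn D X)
    (hne : (X ∩ G.neighborSet v).Nonempty)
    (huniq : (twinsOn G X v \ G.neighborSet v).Subsingleton)
    (hK4 : X.ncard = 3 → ¬ G.IsClique (insert v X)) :
    (obstructions G D X v).ncard < 2 ^ (X ∩ G.neighborSet v).ncard := by
  by_cases htwins : twinsOn G X v ⊆ G.neighborSet v
  · by_cases hadj : X ⊆ G.neighborSet v
    · rw [Set.inter_eq_left.2 hadj]
      exact ncard_obstructions_lt_of_subset hX.1 hadj hK4
    · exact ncard_obstructions_lt_of_not_subset hD hX hadj hne htwins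
  · obtain ⟨u, hu, hvu⟩ := Set.not_subset.1 htwins
    refine (ncard_obstructions_le_one hu hvu huniq).trans_lt (Nat.one_lt_two_pow ?_)
    exact Set.ncard_ne_zero_of_mem hne.some_mem (hX.finite.inter_of_left _)

theorem finite_obstructions (hX : X.Finite) : (obstructions G D X v).Finite :=
  ((Set.toFinite {∅, X}).subset fun _ hA ↦ hA.2).union
    (((hX.subset twinsOn_subset).image _).union
      (((hX.subset twinsOn_subset).inter_of_left _).image _))

theorem primarilyOrientableOn_insert (hX : PrimarilyOrientableOn G X) (hv : v ∉ X)
    (hne : (X ∩ G.neighborSet v).Nonempty)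
    (huniq : (twinsOn G X v \ G.neighborSet v).Subsingleton)
    (hK4 : X.ncard = 3 → ¬ G.IsClique (insert v X)) :
    PrimarilyOrientableOn G (insert v X) := by
  obtain ⟨D, hD, hX⟩ := hX
  have hlt := ncard_obstructions_lt hD hX hne huniq hK4
  rw [← Set.ncard_powerset _ (hX.finite.inter_of_left _)] at hlt
  obtain ⟨A, hA, hobs⟩ :=
    Set.exists_mem_notMem_of_ncard_lt_ncard hlt (finite_obstructions hX.finite)
  exact primarilyOrientableOn_insert_of_notMem_obstructions hD hX hv hne hA hobs

end Counting

section Extension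

variable {G : SimpleGraph V} {X : Set V} {u v : V}

theorem PrimarilyOrientableOn.finite (hX : PrimarilyOrientableOn G X) : X.Finite :=
  let ⟨_, _, hX⟩ := hX
  hX.finite

theorem PrimarilyOrientableOn.three_le_ncard (hX : PrimarilyOrientableOn G X) : 3 ≤ X.ncard :=
  let ⟨_, _, hX⟩ := hX
  hX.1

theorem primarilyOrientableOn_univ_iff [Fintype V] :
    PrimarilyOrientableOn G Set.univ ↔ PrimarilyOrientable G := by
  simp only [PrimarilyOrientableOn, PrimarilyOrientable, dPrimeOn_univ_iff]

theorem sduoOn_pair_iff (huv : u ≠ v) :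
    SduoOn G X {u, v} ↔
      u ∈ X ∧ v ∈ X ∧ ¬ G.Adj u v ∧ ∀ x ∈ X, (G.Adj x u ↔ G.Adj x v) := by
  simp only [SduoOn, ModuleOn, Set.ncard_pair huv, Set.pair_subset_iff, Set.mem_insert_iff,
    Set.mem_singleton_iff, forall_eq_or_imp, forall_eq, Set.mem_sdiff, G.loopless.irrefl,
    G.adj_comm v u]
  constructor
  · rintro ⟨⟨⟨hu, hv⟩, hmod⟩, -, ⟨-, huv⟩, -⟩
    refine ⟨hu, hv, huv, fun x hx ↦ ?_⟩
    by_cases hxu : x = u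
    · simp [hxu, huv]
    by_cases hxv : x = v
    · simp [hxv, huv, G.adj_comm v u]
    have := hmod x ⟨hx, by tauto⟩
    tauto
  · rintro ⟨hu, hv, huv, hmod⟩
    refine ⟨⟨⟨hu, hv⟩, fun x hx ↦ ?_⟩, trivial, ⟨not_false, huv⟩, huv, not_false⟩
    have := hmod x hx.1
    tauto

theorem SduoFree.exists_separating (hfree : SduoFree G) (huv : u ≠ v) (hadj : ¬ G.Adj u v) :
    ∃ w, ¬ (G.Adj w u ↔ G.Adj w v) := by
  by_contra! h
  exact hfree {u, v} ((sduoOn_pair_iff huv).2 ⟨trivial, trivial, hadj, fun x _ ↦ h x⟩)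

theorem subsingleton_twinsOn_sdiff_neighborSet (hX : ∀ S, ¬ SduoOn G X S) :
    (twinsOn G X v \ G.neighborSet v).Subsingleton := by
  have adj_iff {u : V} (hu : u ∈ twinsOn G X v \ G.neighborSet v) (x : V) (hx : x ∈ X) :
      G.Adj u x ↔ G.Adj v x := by
    by_cases hxu : x = u
    · simpa [hxu] using hu.2
    · exact hu.1.2 x hx hxu
  intro a ha b hb
  by_contra hab
  refine hX {a, b} ((sduoOn_pair_iff hab).2 ⟨ha.1.1, hb.1.1, ?_, fun x hx ↦ ?_⟩)
  · rw [adj_iff ha b hb.1.1]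
    exact hb.2
  · rw [G.adj_comm x, G.adj_comm x, adj_iff ha x hx, adj_iff hb x hx]

theorem PrimarilyOrientableOn.exists_insert_of_sduoOn (hX : PrimarilyOrientableOn G X)
    (hfree : SduoFree G) {S : Set V} (hS : SduoOn G X S) :
    ∃ w ∉ X, PrimarilyOrientableOn G (insert w X) := by
  obtain ⟨a, b, hab, rfl⟩ := Set.ncard_eq_two.1 hS.2.1
  obtain ⟨ha, hb, hadj, htwin⟩ := (sduoOn_pair_iff hab).1 hS
  obtain ⟨w, hw⟩ := hfree.exists_separating hab hadj
  have hwX : w ∉ X := fun h ↦ hw (htwin w h)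
  refine ⟨w, hwX, primarilyOrientableOn_insert hX hwX ?_ ?_ fun _ hK ↦
    hadj (hK (.inr ha) (.inr hb) hab)⟩
  · by_cases hwa : G.Adj w a
    · exact ⟨a, ha, hwa⟩
    · exact ⟨b, hb, by_contra fun hwb ↦ hw (iff_of_false hwa hwb)⟩
  · refine Set.Subsingleton.anti Set.subsingleton_empty fun u ⟨hu, hwu⟩ ↦ hw ?_
    have adj_iff (x : V) (hx : x ∈ X) : G.Adj u x ↔ G.Adj w x := by
      by_cases hxu : x = u
      · simpa [hxu] using hwu
      · exact hu.2 x hx hxu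
    rw [← adj_iff a ha, ← adj_iff b hb]
    exact htwin u hu.1

theorem PrimarilyOrientableOn.exists_insert (hX : PrimarilyOrientableOn G X)
    (hfree : SduoFree G) (hv : v ∉ X) (hne : (X ∩ G.neighborSet v).Nonempty)
    (hK4 : X.ncard = 3 → ¬ G.IsClique (insert v X)) :
    ∃ w ∉ X, PrimarilyOrientableOn G (insert w X) := by
  by_cases hS : ∃ S, SduoOn G X S
  · exact hX.exists_insert_of_sduoOn hfree hS.choose_spec
  · exact ⟨v, hv, primarilyOrientableOn_insert hX hv hne
      (subsingleton_twinsOn_sdiff_neighborSet (not_exists.1 hS)) hK4⟩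

end Extension

section SmallGraphs

variable {G : SimpleGraph V} {K : Set V} {a b c : V}

theorem primarilyOrientableOn_range {W : Type*} [Fintype W] (f : W ↪ V)
    (h : PrimarilyOrientable (G.comap f)) : PrimarilyOrientableOn G (Set.range f) := by
  obtain ⟨E, hE, hprime⟩ := h
  obtain ⟨D, hD, hED⟩ := exists_isOrientation_extending G (E := Relation.Map E f f) (by
    rintro _ _ ⟨i, j, hij, rfl, rfl⟩
    rw [Relation.map_apply_apply f.injective f.injective]
    exact hE.not_symm hij)
  have hED' {i j : W} (hij : E i j) : D (f i) (f j) := hED _ _ (hE.adj hij) ⟨i, j, hij, rfl, rfl⟩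
  have hDE (i j : W) : D (f i) (f j) ↔ E i j := by
    refine ⟨fun h ↦ ?_, hED'⟩
    exact (hE.adj_iff.1 (hD.adj h)).resolve_right fun hji ↦ hD.not_symm h (hED' hji)
  refine ⟨D, hD, dPrimeOn_range f ?_⟩
  simpa only [hDE] using hprime

theorem primarilyOrientable_top_five : PrimarilyOrientable (⊤ : SimpleGraph (Fin 5)) := by
  have hprime : ∀ M : Finset (Fin 5), (∀ v ∉ M, ∀ x ∈ M, ∀ y ∈ M,
      ((x = v + 1 ∨ x = v + 2) ↔ (y = v + 1 ∨ y = v + 2)) ∧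
        ((v = x + 1 ∨ v = x + 2) ↔ (v = y + 1 ∨ v = y + 2))) →
      M.card ≤ 1 ∨ M = Finset.univ := by decide
  refine ⟨fun i j ↦ j = i + 1 ∨ j = i + 2, ?_, by simp, fun M hM ↦ ?_⟩
  · unfold IsOrientation
    decide
  · classical
    lift M to Finset (Fin 5) using M.toFinite
    simpa [Finset.card_le_one_iff_subsingleton] using hprime M hM

theorem primarilyOrientableOn_of_isClique (hK : G.IsClique K) (hcard : K.ncard = 5) :
    PrimarilyOrientableOn G K := by
  have : Finite K := Set.finite_of_ncard_ne_zero (by lia)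
  let e : Fin 5 ≃ K := (Finite.equivFinOfCardEq hcard).symm
  let f : Fin 5 ↪ V := e.toEmbedding.trans (.subtype _)
  have hcomap : G.comap f = ⊤ := by
    ext i j
    refine ⟨fun h ↦ ne_of_apply_ne f (G.ne_of_adj h), fun hij ↦ ?_⟩
    exact hK (e i).2 (e j).2 (f.injective.ne hij)
  have hrange : Set.range f = K := (e.surjective.range_comp Subtype.val).trans Subtype.range_coe
  rw [← hrange]
  exact primarilyOrientableOn_range f (hcomap ▸ primarilyOrientable_top_five)

theorem dPrimeOn_triple {D : V → V → Prop} (hD : IsOrientation G D) (hab : D a b) (hbc : D b c)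
    (hac : a ≠ c) (hnac : ¬ D a c) : DPrimeOn D {a, b, c} := by
  have hab' : a ≠ b := (hD.adj hab).ne
  have hbc' : b ≠ c := (hD.adj hbc).ne
  refine ⟨(Set.ncard_eq_three.2 ⟨a, b, c, hab', hac, hbc', rfl⟩).ge, fun M hM ↦ ?_⟩
  have mem_c (ha : a ∈ M) (hb : b ∈ M) : c ∈ M := by_contra fun hc ↦
    hnac ((hM.2 c ⟨by simp, hc⟩ a ha b hb).2.2 hbc)
  have mem_a (hb : b ∈ M) (hc : c ∈ M) : a ∈ M := by_contra fun ha ↦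
    hnac ((hM.2 a ⟨by simp, ha⟩ b hb c hc).1.1 hab)
  have mem_b (ha : a ∈ M) (hc : c ∈ M) : b ∈ M := by_contra fun hb ↦
    hD.not_symm hbc ((hM.2 b ⟨by simp, hb⟩ a ha c hc).2.1 hab)
  by_cases hall : a ∈ M ∧ b ∈ M ∧ c ∈ M
  · exact .inr (hM.1.antisymm (by simpa [Set.insert_subset_iff] using hall))
  · refine .inl fun x hx y hy ↦ ?_
    rcases hM.1 hx with rfl | rfl | rfl <;> rcases hM.1 hy with rfl | rfl | rfl <;> tauto

theorem primarilyOrientableOn_triple (hab : G.Adj a b) (hbc : G.Adj b c) (hac : a ≠ c) :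
    PrimarilyOrientableOn G {a, b, c} := by
  obtain ⟨D, hD, hED⟩ := exists_isOrientation_extending G
    (E := fun x y ↦ x = a ∧ y = b ∨ x = b ∧ y = c ∨ x = c ∧ y = a) (by
      have := hab.ne
      have := hbc.ne
      grind)
  refine ⟨D, hD, dPrimeOn_triple hD (hED a b hab (by simp)) (hED b c hbc (by simp)) hac fun h ↦ ?_⟩
  exact hD.not_symm h (hED c a (hD.adj h).symm (by simp))

end SmallGraphs

section Connected

variable {G : SimpleGraph V} {X K : Set V} {v : V}

theorem exists_notMem_inter_neighborSet_nonempty (hconn : G.Connected) (hX : X.Nonempty)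
    (hX_univ : X ≠ Set.univ) : ∃ v ∉ X, (X ∩ G.neighborSet v).Nonempty := by
  obtain ⟨x, hx⟩ := hX
  obtain ⟨w, hw⟩ := (Set.ne_univ_iff_exists_notMem X).1 hX_univ
  obtain ⟨p⟩ := hconn.preconnected x w
  obtain ⟨d, -, hfst, hsnd⟩ := p.exists_boundary_dart X hx hw
  exact ⟨d.snd, hsnd, d.fst, hfst, d.adj.symm⟩

theorem exists_adj_adj_ne (hconn : G.Connected) (hcard : 2 < ENat.card V) :
    ∃ a b c, G.Adj a b ∧ G.Adj b c ∧ a ≠ c := by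
  have hpair (a b : V) : ({a, b} : Set V) ≠ Set.univ := fun h ↦ by
    have hle : ({a, b} : Set V).encard ≤ 2 :=
      (Set.encard_insert_le {b} a).trans (by rw [Set.encard_singleton, one_add_one_eq_two])
    rw [h, Set.encard_univ] at hle
    exact hcard.not_ge hle
  obtain ⟨a⟩ := hconn.nonempty
  obtain ⟨b, -, x, hx, hba⟩ :=
    exists_notMem_inter_neighborSet_nonempty hconn ⟨a, .inl rfl⟩ (hpair a a)
  obtain rfl : x = a := by simpa using hx
  obtain ⟨c, hc, y, rfl | rfl, hcy⟩ :=
    exists_notMem_inter_neighborSet_nonempty hconn ⟨x, .inl rfl⟩ (hpair x b)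
  · exact ⟨b, y, c, hba, hcy.symm, fun h ↦ hc (.inr h.symm)⟩
  · exact ⟨x, y, c, hba.symm, hcy.symm, fun h ↦ hc (.inl h.symm)⟩

theorem exists_primarilyOrientableOn_of_connected (hconn : G.Connected)
    (hcard : 2 < ENat.card V) : ∃ X, PrimarilyOrientableOn G X :=
  let ⟨_, _, _, hab, hbc, hac⟩ := exists_adj_adj_ne hconn hcard
  ⟨_, primarilyOrientableOn_triple hab hbc hac⟩

theorem exists_four_le_ncard_of_isClique (hfree : SduoFree G) (hK : G.IsClique K)
    (hcard : K.ncard = 4) (hv : v ∉ K) (hne : (K ∩ G.neighborSet v).Nonempty) :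
    ∃ Y, PrimarilyOrientableOn G Y ∧ 4 ≤ Y.ncard := by
  have hfin : K.Finite := Set.finite_of_ncard_ne_zero (by lia)
  by_cases hadj : K ⊆ G.neighborSet v
  · have hcard' : (insert v K).ncard = 5 := by rw [Set.ncard_insert_of_notMem hv hfin, hcard]
    exact ⟨_, primarilyOrientableOn_of_isClique (hK.insert fun b hb _ ↦ hadj hb) hcard', by lia⟩
  · obtain ⟨a, ha, hva⟩ := Set.not_subset.1 hadj
    obtain ⟨b, hb, hvb⟩ := hne
    have hab : a ≠ b := fun h ↦ hva (h ▸ hvb)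
    obtain ⟨c, hc, hcab⟩ := Set.exists_mem_notMem_of_ncard_lt_ncard
      (s := {a, b}) (t := K) (by rw [Set.ncard_pair hab]; lia)
    obtain ⟨hca, hcb⟩ : c ≠ a ∧ c ≠ b := by simpa using hcab
    have htri : PrimarilyOrientableOn G {a, b, c} :=
      primarilyOrientableOn_triple (hK ha hb hab) (hK hb hc hcb.symm) hca.symm
    have hsub : {a, b, c} ⊆ K := by simp [Set.insert_subset_iff, ha, hb, hc]
    obtain ⟨w, hw, hY⟩ := htri.exists_insert hfree (fun h ↦ hv (hsub h)) ⟨b, by simp, hvb⟩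
      fun _ h ↦ hva (h (.inl rfl) (.inr (.inl rfl)) (ne_of_mem_of_not_mem ha hv).symm)
    refine ⟨_, hY, ?_⟩
    rw [Set.ncard_insert_of_notMem hw]
    exact Nat.succ_le_succ htri.three_le_ncard

theorem nonempty_iso_top_of_isClique_univ {n : ℕ} (h : G.IsClique Set.univ)
    (hcard : (Set.univ : Set V).ncard = n) (hn : n ≠ 0) :
    Nonempty (G ≃g (⊤ : SimpleGraph (Fin n))) := by
  have : Finite V := Set.finite_univ_iff.1 (Set.finite_of_ncard_ne_zero (hcard.trans_ne hn))
  rw [SimpleGraph.isClique_univ.1 h]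
  exact ⟨.completeGraph (Finite.equivFinOfCardEq (Set.ncard_univ V ▸ hcard))⟩

theorem PrimarilyOrientableOn.exists_ncard_lt (hX : PrimarilyOrientableOn G X)
    (hconn : G.Connected) (hfree : SduoFree G)
    (hK4 : ¬ Nonempty (G ≃g (⊤ : SimpleGraph (Fin 4)))) (hX_univ : X ≠ Set.univ) :
    ∃ Y, PrimarilyOrientableOn G Y ∧ X.ncard < Y.ncard := by
  have hX_ne : X.Nonempty := Set.nonempty_of_ncard_ne_zero (by have := hX.three_le_ncard; lia)
  obtain ⟨v, hv, hne⟩ := exists_notMem_inter_neighborSet_nonempty hconn hX_ne hX_univ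
  by_cases hclique : X.ncard = 3 ∧ G.IsClique (insert v X)
  · obtain ⟨hcard, hK⟩ := hclique
    have hcard' : (insert v X).ncard = 4 := by
      rw [Set.ncard_insert_of_notMem hv hX.finite, hcard]
    have hK_univ : insert v X ≠ Set.univ := fun h ↦
      hK4 (nonempty_iso_top_of_isClique_univ (h ▸ hK) (h ▸ hcard') four_ne_zero)
    obtain ⟨z, hz, hzne⟩ :=
      exists_notMem_inter_neighborSet_nonempty hconn (Set.insert_nonempty v X) hK_univ
    rw [hcard]
    exact exists_four_le_ncard_of_isClique hfree hK hcard' hz hzne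
  · obtain ⟨w, hw, hY⟩ := hX.exists_insert hfree hv hne (not_and.1 hclique)
    exact ⟨_, hY, by simp [Set.ncard_insert_of_notMem hw hX.finite]⟩

end Connected

/-- A connected sduo-free graph with at least three vertices, other than `K₄`, is
primarily orientable. -/
theorem sduo_free_primarily_orientable [Fintype V] (G : SimpleGraph V)
    (hcard : 3 ≤ Fintype.card V)
    (hK4 : ¬ Nonempty (G ≃g (⊤ : SimpleGraph (Fin 4))))
    (hconn : G.Connected) (hfree : SduoFree G) :
    PrimarilyOrientable G := by
  have hcard' : 2 < ENat.card V := by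
    rw [ENat.card_eq_coe_fintype_card]
    exact_mod_cast hcard
  obtain ⟨X, hX, hmax⟩ := Set.exists_max_image {X | PrimarilyOrientableOn G X} Set.ncard
    (Set.toFinite _) (exists_primarilyOrientableOn_of_connected hconn hcard')
  have hX_univ : X = Set.univ := by
    by_contra hne
    obtain ⟨Y, hY, hlt⟩ := PrimarilyOrientableOn.exists_ncard_lt hX hconn hfree hK4 hne
    exact (hmax Y hY).not_gt hlt
  exact primarilyOrientableOn_univ_iff.1 (hX_univ ▸ hX)
end

section
/- Let D be a digraph and let X ⊆ V(D) be such that the induced subdigraph D[X] is prime. Let u and v be distinct vertices of Ext_D(X). If {u,v} is not a module of D[X ∪ {u,v}], then D[X ∪ {u,v}] is prime. -/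
variable {V : Type*}

/-!
A prime induced subdigraph `D[Z]` either meets a given module in at most one vertex or is contained
in it. Apply this to `Z = X ∪ {u}` and `Z = X ∪ {v}`. As `X` has at least two vertices, a module of
`D[X ∪ {u, v}]` containing `X` also contains `u` and `v`. A module with at least two vertices that
does not contain `X` meets both sets `Z` in at most one vertex, so it can only be `{u, v}`.
-/

section

variable {D : V → V → Prop} {X Y Z M : Set V} {u v : V}

theorem eq_pair_of_subsingleton_inter (hM : M.Nontrivial)
    (hMX : M ⊆ X ∪ {u, v}) (hu : (M ∩ (X ∪ {u})).Subsingleton)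
    (hv : (M ∩ (X ∪ {v})).Subsingleton) : M = {u, v} := by
  have mem_u : u ∈ M := by
    by_contra huM
    have hMv : M ⊆ X ∪ {v} := by grind
    exact hM.not_subsingleton (hv.anti (Set.subset_inter subset_rfl hMv))
  have mem_v : v ∈ M := by
    by_contra hvM
    have hMu : M ⊆ X ∪ {u} := by grind
    exact hM.not_subsingleton (hu.anti (Set.subset_inter subset_rfl hMu))
  refine Set.Subset.antisymm (fun x hx => ?_) (Set.pair_subset mem_u mem_v)
  rcases hMX hx with hxX | hxuv
  · exact Or.inl (hu ⟨hx, Or.inl hxX⟩ ⟨mem_u, Or.inr rfl⟩)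
  · exact hxuv

theorem DModuleOn.inter_of_subset (hM : DModuleOn D Y M) (hZY : Z ⊆ Y) :
    DModuleOn D Z (M ∩ Z) :=
  ⟨Set.inter_subset_right, fun w hw x hx y hy =>
    hM.2 w ⟨hZY hw.1, fun hwM => hw.2 ⟨hwM, hw.1⟩⟩ x hx.1 y hy.1⟩

namespace DPrimeOn

theorem finite_s19 (hX : DPrimeOn D X) : X.Finite :=
  Set.finite_of_ncard_pos (Nat.zero_lt_of_lt hX.1)

theorem nontrivial_of_union_singleton (hv : DPrimeOn D (X ∪ {v})) : X.Nontrivial := by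
  have hcard : (X ∪ {v}).ncard ≤ X.ncard + 1 := by
    simpa only [Set.ncard_singleton] using Set.ncard_union_le X {v}
  have hone : 1 < X.ncard := by linarith [hv.1]
  exact (Set.one_lt_ncard_iff_nontrivial_and_finite.mp hone).1

theorem subsingleton_inter_or_subset (hZ : DPrimeOn D Z) (hM : DModuleOn D Y M) (hZY : Z ⊆ Y) :
    (M ∩ Z).Subsingleton ∨ Z ⊆ M :=
  (hZ.2 _ (hM.inter_of_subset hZY)).imp_right Set.inter_eq_right.mp

theorem subset_of_nontrivial_subset (hZ : DPrimeOn D Z) (hM : DModuleOn D Y M) (hZY : Z ⊆ Y)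
    (hX : X.Nontrivial) (hXZ : X ⊆ Z) (hXM : X ⊆ M) : Z ⊆ M :=
  (hZ.subsingleton_inter_or_subset hM hZY).resolve_left
    fun hsub => hX.not_subsingleton (hsub.anti (Set.subset_inter hXM hXZ))

theorem subsingleton_inter_of_not_subset (hZ : DPrimeOn D Z) (hM : DModuleOn D Y M)
    (hZY : Z ⊆ Y) (hXZ : X ⊆ Z) (hXM : ¬ X ⊆ M) : (M ∩ Z).Subsingleton :=
  (hZ.subsingleton_inter_or_subset hM hZY).resolve_right fun hsub => hXM (hXZ.trans hsub)

end DPrimeOn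

theorem prime_extension_ext_general (hu : DPrimeOn D (X ∪ {u})) (hv : DPrimeOn D (X ∪ {v}))
    (hmod : ¬ DModuleOn D (X ∪ {u, v}) {u, v}) : DPrimeOn D (X ∪ {u, v}) := by
  have hsubu : X ∪ {u} ⊆ X ∪ {u, v} := Set.union_subset_union_right X (by simp)
  have hsubv : X ∪ {v} ⊆ X ∪ {u, v} := Set.union_subset_union_right X (by simp)
  have hfin : (X ∪ {u, v}).Finite :=
    (hu.finite_s19.subset Set.subset_union_left).union (Set.toFinite {u, v})
  refine ⟨hu.1.trans (Set.ncard_le_ncard hsubu hfin), fun M hM => ?_⟩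
  by_cases hXM : X ⊆ M
  · have hX : X.Nontrivial := hu.nontrivial_of_union_singleton
    have huM : X ∪ {u} ⊆ M :=
      hu.subset_of_nontrivial_subset hM hsubu hX Set.subset_union_left hXM
    have hvM : X ∪ {v} ⊆ M :=
      hv.subset_of_nontrivial_subset hM hsubv hX Set.subset_union_left hXM
    exact Or.inr (hM.1.antisymm (by grind))
  · refine Or.inl (Set.not_nontrivial_iff.mp fun hMnt => hmod ?_)
    have hM_eq : M = {u, v} := eq_pair_of_subsingleton_inter hMnt hM.1
      (hu.subsingleton_inter_of_not_subset hM hsubu Set.subset_union_left hXM)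
      (hv.subsingleton_inter_of_not_subset hM hsubv Set.subset_union_left hXM)
    exact hM_eq ▸ hM

end

/-- Lemma (ER, 6.3/6.4, assertion 3): if `u ≠ v` belong to `Ext_D(X)` and `{u, v}`
is not a module of `D[X ∪ {u, v}]`, then `D[X ∪ {u, v}]` is prime. -/
theorem prime_extension_ext [Fintype V] (D : V → V → Prop)
    (X : Set V) (hX : DPrimeOn D X)
    (u v : V) (hu : u ∈ ExtD D X) (hv : v ∈ ExtD D X) (huv : u ≠ v)
    (hmod : ¬ DModuleOn D (X ∪ {u, v}) ({u, v} : Set V)) :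
    DPrimeOn D (X ∪ {u, v}) :=
  prime_extension_ext_general hu.2 hv.2 hmod
end
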